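/- arXiv:1412.3691 — 3 statements merged into one kernel-verified Lean document; each statement's English description precedes it below -/
import Mathlib

section
/- The Scharfetter–Gummel stabilization function is nonnegative: for every real X ≠ 0, B(X) + X/2 ≥ 1; consequently Φ(Pe) = B(2Pe) + Pe − 1 ≥ 0 for every Pe ≠ 0. -/
/-- The Bernoulli-type function `B(Z) = Z/(exp Z − 1)` for `Z ≠ 0`, with `B(0) = 1`. -/
noncomputable def sgBern (Z : ℝ) : ℝ := if Z = 0 then 1 else Z / (Real.exp Z - 1)

/-!
For `x ≠ 0` one has `B(2x) + x = x coth x`, an even function of `x`, so the claim reduces to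
`tanh x ≤ x` for `x > 0`. This holds since `x - tanh x` vanishes at `0` and has derivative
`tanh² x ≥ 0`.
-/

open Real

theorem hasDerivAt_tanh (x : ℝ) : HasDerivAt tanh (1 - tanh x ^ 2) x := by
  have h_quot : HasDerivAt (fun y => sinh y / cosh y)
      ((cosh x * cosh x - sinh x * sinh x) / cosh x ^ 2) x :=
    (hasDerivAt_sinh x).fun_div (hasDerivAt_cosh x) (cosh_pos x).ne'
  have h_deriv : (cosh x * cosh x - sinh x * sinh x) / cosh x ^ 2 = 1 - tanh x ^ 2 := by
    have h_cosh : cosh x ≠ 0 := (cosh_pos x).ne'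
    rw [tanh_eq_sinh_div_cosh]
    field_simp
  rw [h_deriv] at h_quot
  simpa only [← tanh_eq_sinh_div_cosh] using h_quot

theorem monotone_sub_tanh : Monotone fun x : ℝ => x - tanh x := by
  refine monotone_of_hasDerivAt_nonneg (f' := fun x => tanh x ^ 2) (fun x => ?_)
    fun x => sq_nonneg (tanh x)
  simpa only [sub_sub_cancel] using (hasDerivAt_id' x).fun_sub (hasDerivAt_tanh x)

theorem tanh_le_self {x : ℝ} (hx : 0 ≤ x) : tanh x ≤ x := by
  simpa only [tanh_zero, sub_zero, sub_nonneg] using monotone_sub_tanh hx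

theorem tanh_pos {x : ℝ} (hx : 0 < x) : 0 < tanh x := by
  rw [tanh_eq_sinh_div_cosh]
  exact div_pos (sinh_pos_iff.mpr hx) (cosh_pos x)

theorem one_le_div_tanh {x : ℝ} (hx : x ≠ 0) : 1 ≤ x / tanh x := by
  have of_pos {y : ℝ} (hy : 0 < y) : 1 ≤ y / tanh y :=
    (one_le_div (tanh_pos hy)).mpr (tanh_le_self hy.le)
  rcases hx.lt_or_gt with h_neg | h_pos
  · simpa only [tanh_neg, neg_div_neg_eq] using of_pos (neg_pos.mpr h_neg)
  · exact of_pos h_pos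

theorem sgBern_two_mul_add_self {x : ℝ} (hx : x ≠ 0) : sgBern (2 * x) + x = x / tanh x := by
  have h_two_mul : 2 * x ≠ 0 := mul_ne_zero two_ne_zero hx
  have h_exp : exp x ^ 2 - 1 ≠ 0 := by
    rw [← exp_nat_mul, Nat.cast_ofNat, sub_ne_zero]
    exact (exp_eq_one_iff _).not.mpr h_two_mul
  have h_tanh : tanh x = (exp x ^ 2 - 1) / (exp x ^ 2 + 1) := by
    rw [tanh_eq, exp_neg]
    field_simp
  rw [sgBern, if_neg h_two_mul, h_tanh, two_mul x, exp_add, ← sq]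
  field_simp
  ring

/-- Nonnegativity of the Scharfetter–Gummel stabilization function: for every real
`X ≠ 0`, `B(X) + X/2 ≥ 1`; consequently `Φ(Pe) = B(2Pe) + Pe − 1 ≥ 0` for `Pe ≠ 0`. -/
theorem sg_stabilization_nonneg :
    (∀ X : ℝ, X ≠ 0 → 1 ≤ sgBern X + X / 2) ∧
    (∀ Pe : ℝ, Pe ≠ 0 → 0 ≤ sgBern (2 * Pe) + Pe - 1) := by
  have one_le {x : ℝ} (hx : x ≠ 0) : 1 ≤ sgBern (2 * x) + x :=
    sgBern_two_mul_add_self hx ▸ one_le_div_tanh hx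
  refine ⟨fun X hX => ?_, fun Pe hPe => sub_nonneg.mpr (one_le hPe)⟩
  simpa only [mul_div_cancel₀ X two_ne_zero] using one_le (div_ne_zero hX two_ne_zero)
end

section
/- Exactness of the Scharfetter–Gummel scheme at thermal equilibrium: let V > 0, μ > 0, C > 0, h > 0, D = μV, and let φ₁ ≠ φ₂ be two real potential values with nodal carrier densities n₁ = C·exp(φ₁/V) and n₂ = C·exp(φ₂/V). Set Pe = |φ₂ − φ₁|/(2V) and Φ(Pe) = B(2Pe) + Pe − 1. Then the stabilized 1D flux vanishes exactly: μ·((n₁ + n₂)/2)·(−(φ₂ − φ₁)/h) + D·(1 + Φ(Pe))·(n₂ − n₁)/h = 0. -/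
/-!
Put `t = (φ₂ - φ₁) / V`. The reflection law `B(-Z) = B(Z) + Z` makes `Φ` even, so the absolute
value in `Pe` can be dropped. For arbitrary densities the stabilized flux is therefore the
Scharfetter–Gummel flux `(μ V / h) (B(t) n₂ - B(-t) n₁)`, and at equilibrium its two terms cancel
because `B(-t) = B(t) exp t`.
-/

theorem sgBern_mul_exp_sub_one (Z : ℝ) : sgBern Z * (Real.exp Z - 1) = Z := by
  rcases eq_or_ne Z 0 with rfl | hZ
  · simp
  · have hexp : Real.exp Z - 1 ≠ 0 := sub_ne_zero.2 (mt (Real.exp_eq_one_iff Z).1 hZ)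
    rw [sgBern, if_neg hZ, div_mul_cancel₀ Z hexp]

theorem sgBern_neg_eq_mul_exp (Z : ℝ) : sgBern (-Z) = sgBern Z * Real.exp Z := by
  rcases eq_or_ne Z 0 with rfl | hZ
  · simp
  · have hexp : Real.exp Z - 1 ≠ 0 :=
      right_ne_zero_of_mul ((sgBern_mul_exp_sub_one Z).trans_ne hZ)
    have hinv : Real.exp (-Z) * Real.exp Z = 1 := by
      rw [← Real.exp_add, neg_add_cancel, Real.exp_zero]
    apply mul_right_cancel₀ hexp
    linear_combination sgBern (-Z) * hinv - Real.exp Z * sgBern_mul_exp_sub_one (-Z) -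
      Real.exp Z * sgBern_mul_exp_sub_one Z

theorem sgBern_neg (Z : ℝ) : sgBern (-Z) = sgBern Z + Z := by
  linear_combination sgBern_neg_eq_mul_exp Z + sgBern_mul_exp_sub_one Z

theorem sgBern_sub_mul_exp (a b : ℝ) :
    sgBern (b - a) * Real.exp b = sgBern (a - b) * Real.exp a := by
  rw [← neg_sub b a, sgBern_neg_eq_mul_exp, mul_assoc, ← Real.exp_add, sub_add_cancel]

/-- The artificial-diffusion function `Φ` of the Péclet number: the stabilization replaces the
diffusivity `D` by `D (1 + Φ(Pe))`. -/
noncomputable def sgStabilization (P : ℝ) : ℝ := sgBern (2 * P) + P - 1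

theorem sgStabilization_neg (P : ℝ) : sgStabilization (-P) = sgStabilization P := by
  rw [sgStabilization, sgStabilization, mul_neg, sgBern_neg]
  ring

theorem sgStabilization_abs_div (x y : ℝ) :
    sgStabilization (|x| / y) = sgStabilization (x / y) := by
  rcases abs_choice x with habs | habs
  · rw [habs]
  · rw [habs, neg_div, sgStabilization_neg]

/-- The stabilized flux `J / q` on an element of length `h` with linear potential and density,
where the diffusivity is `μ * V` by Einstein's relation. -/
noncomputable def stabilizedFlux (μ V h φ₁ φ₂ n₁ n₂ : ℝ) : ℝ :=
  μ * ((n₁ + n₂) / 2) * (-(φ₂ - φ₁) / h) +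
    μ * V * (1 + sgStabilization (|φ₂ - φ₁| / (2 * V))) * ((n₂ - n₁) / h)

/-- The Scharfetter–Gummel flux `J / q` on an element of length `h`, in its usual two-point form
with Bernoulli weights. -/
noncomputable def scharfetterGummelFlux (μ V h φ₁ φ₂ n₁ n₂ : ℝ) : ℝ :=
  μ * V / h * (sgBern (φ₂ / V - φ₁ / V) * n₂ - sgBern (φ₁ / V - φ₂ / V) * n₁)

theorem stabilizedFlux_eq_scharfetterGummelFlux {V : ℝ} (hV : V ≠ 0) (μ h φ₁ φ₂ n₁ n₂ : ℝ) :
    stabilizedFlux μ V h φ₁ φ₂ n₁ n₂ = scharfetterGummelFlux μ V h φ₁ φ₂ n₁ n₂ := by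
  have htwice : 2 * ((φ₂ - φ₁) / (2 * V)) = φ₂ / V - φ₁ / V := by
    field_simp
  have hdiffusion : 1 + sgStabilization (|φ₂ - φ₁| / (2 * V)) =
      sgBern (φ₂ / V - φ₁ / V) + (φ₂ / V - φ₁ / V) / 2 := by
    rw [sgStabilization_abs_div, sgStabilization, htwice]
    linear_combination htwice / 2
  have hdrift : φ₂ - φ₁ = V * (φ₂ / V - φ₁ / V) := by
    rw [← sub_div, mul_div_cancel₀ _ hV]
  rw [stabilizedFlux, scharfetterGummelFlux, hdiffusion, hdrift, ← neg_sub (φ₂ / V), sgBern_neg]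
  ring

theorem scharfetterGummelFlux_equilibrium (μ V h C φ₁ φ₂ : ℝ) :
    scharfetterGummelFlux μ V h φ₁ φ₂ (C * Real.exp (φ₁ / V)) (C * Real.exp (φ₂ / V)) = 0 := by
  rw [scharfetterGummelFlux]
  linear_combination μ * V / h * C * sgBern_sub_mul_exp (φ₁ / V) (φ₂ / V)

/-- Exactness of the Scharfetter–Gummel scheme at thermal equilibrium: on nodal data
`n_j = C·exp(φ_j/V)` the artificial-diffusion stabilized 1D flux vanishes exactly. -/
theorem sg_flux_vanishes_at_equilibrium
    (V μ C h D φ₁ φ₂ n₁ n₂ Pe : ℝ)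
    (hV : 0 < V) (hμ : 0 < μ) (hC : 0 < C) (hh : 0 < h) (hD : D = μ * V)
    (hφ : φ₁ ≠ φ₂)
    (hn₁ : n₁ = C * Real.exp (φ₁ / V)) (hn₂ : n₂ = C * Real.exp (φ₂ / V))
    (hPe : Pe = |φ₂ - φ₁| / (2 * V)) :
    μ * ((n₁ + n₂) / 2) * (-(φ₂ - φ₁) / h) +
      D * (1 + (sgBern (2 * Pe) + Pe - 1)) * ((n₂ - n₁) / h) = 0 := by
  calc
    _ = stabilizedFlux μ V h φ₁ φ₂ n₁ n₂ := by rw [hD, hPe, stabilizedFlux, sgStabilization]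
    _ = scharfetterGummelFlux μ V h φ₁ φ₂ n₁ n₂ :=
      stabilizedFlux_eq_scharfetterGummelFlux hV.ne' μ h φ₁ φ₂ n₁ n₂
    _ = 0 := by rw [hn₁, hn₂, scharfetterGummelFlux_equilibrium]
end

section
/- Equivalence of the stabilized flux with the classic 1D Scharfetter–Gummel formula: let V > 0, μ > 0, h > 0, D = μV, φ₁ ≠ φ₂, and let n₁, n₂ be arbitrary real nodal densities. Set X = (φ₂ − φ₁)/V, Pe = |X|/2, and Φ(Pe) = B(2Pe) + Pe − 1. Then μ·((n₁ + n₂)/2)·(−(φ₂ − φ₁)/h) + D·(1 + Φ(Pe))·(n₂ − n₁)/h = (D/h)·(n₂·B(X) − n₁·B(−X)). -/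
/-!
`B(Z) + Z/2` is even (it is `(Z/2) coth (Z/2)` for `Z ≠ 0`), so it takes the same value at `X` and
at `|X| = 2 Pe`; that value is the factor `1 + Φ(Pe)`. On the other side, the Scharfetter–Gummel
difference `n₂ B(X) - n₁ B(-X)` splits into the jump `n₂ - n₁` weighted by this even function and
the mean `(n₁ + n₂)/2` weighted by the drift `-X`.
-/

theorem sgBern_of_ne_zero {Z : ℝ} (hZ : Z ≠ 0) : sgBern Z = Z / (Real.exp Z - 1) := if_neg hZ

theorem even_sgBern_add_half : Function.Even fun Z : ℝ ↦ sgBern Z + Z / 2 := fun Z ↦ by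
  linear_combination sgBern_neg Z

theorem sgBern_abs_add_half (Z : ℝ) : sgBern |Z| + |Z| / 2 = sgBern Z + Z / 2 := by
  rcases abs_choice Z with hZ | hZ
  · rw [hZ]
  · rw [hZ]
    exact even_sgBern_add_half Z

theorem sgBern_difference_eq_jump_sub_mean (X n₁ n₂ : ℝ) :
    n₂ * sgBern X - n₁ * sgBern (-X) =
      (sgBern X + X / 2) * (n₂ - n₁) - X * ((n₁ + n₂) / 2) := by
  rw [sgBern_neg]
  ring

/-- Equivalence of the artificial-diffusion stabilized 1D flux with the classic
Scharfetter–Gummel difference formula, for arbitrary nodal densities `n₁, n₂`. -/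
theorem sg_flux_eq_sg_formula
    (V μ h D φ₁ φ₂ n₁ n₂ X Pe : ℝ)
    (hV : 0 < V) (hμ : 0 < μ) (hh : 0 < h) (hD : D = μ * V)
    (hφ : φ₁ ≠ φ₂) (hX : X = (φ₂ - φ₁) / V) (hPe : Pe = |X| / 2) :
    μ * ((n₁ + n₂) / 2) * (-(φ₂ - φ₁) / h) +
        D * (1 + (sgBern (2 * Pe) + Pe - 1)) * ((n₂ - n₁) / h) =
      (D / h) * (n₂ * sgBern X - n₁ * sgBern (-X)) := by
  have drift : μ * (φ₂ - φ₁) = D * X := by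
    rw [hD, hX, mul_assoc, mul_div_cancel₀ _ hV.ne']
  have diffusion : 1 + (sgBern (2 * Pe) + Pe - 1) = sgBern X + X / 2 := by
    rw [add_sub_cancel, hPe, mul_div_cancel₀ _ two_ne_zero, sgBern_abs_add_half]
  rw [diffusion, sgBern_difference_eq_jump_sub_mean]
  linear_combination -((n₁ + n₂) / 2 / h) * drift
end
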